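/- Let 1 ≤ p < N and let Ω ⊆ ℝ^N be a domain with 0 ∈ Ω. Then the best Hardy constant H_p(Ω) := inf over nonzero u ∈ C_c^∞(Ω) of [ ∫_Ω |(x/H⁰(x)) · ∇u(x)|^p dx / ∫_Ω |u(x)|^p / H⁰(x)^p dx ] equals ((N−p)/p)^p. Moreover, if 1 < p < N, the infimum is not attained: for every nonzero u ∈ C_c^∞(Ω) the above quotient is strictly greater than ((N−p)/p)^p. -/

import Mathlib

/-! Let `Du = x · ∇u` be the Euler derivative, the generator of dilations. After the factor
`1 / H⁰(x)` is moved into the measure, the quotient is `∫ |Du|^p dν / ∫ |u|^p dν` with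
`ν = (H⁰)^(-p) dx`, and the only structure left is that `ν` scales with degree `d = N - p` under
dilations. Differentiating this scaling law gives Euler's identity `∫ Df dν = -d ∫ f dν`.

*Lower bound.* Let `c = d / p`. For `p > 1`, Euler's identity for `f = |u|^p` turns
`∫ |Du|^p dν - c^p ∫ |u|^p dν` into the integral of the Bregman divergence of `|·|^p` between `Du`
and `-c u`, which is nonnegative. It vanishes only if `Du = -c u` everywhere, that is, if `u` is
homogeneous of degree `-c`, and compact support then forces `u = 0`.

*Sharpness.* The measure `|x|^(-d) ν` is invariant under dilations, so its image under
`log |·|` is a multiple of Lebesgue measure on the line. For `u = |x|^(-c) χ(log |x|)`, which is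
smooth because the Euclidean norm is, the quotient is therefore `∫ |χ' - c χ|^p / ∫ |χ|^p`. It tends
to `c^p` as `χ` is stretched, and supporting `χ` near `-∞` keeps the support of `u` inside `Ω`. -/

open MeasureTheory Set Filter
open scoped RealInnerProductSpace Topology ENNReal NNReal

noncomputable section

/-- `ℝ^N` as a Euclidean space. -/
abbrev Euc (N : ℕ) := EuclideanSpace ℝ (Fin N)

/-- `H : ℝ^N → ℝ` is a Finsler norm: nonnegative, convex, `C²` away from the origin,
even and positively one-homogeneous, comparable to the Euclidean norm, and with
positive definite Hessian of `H²` away from the origin. -/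
structure IsFinslerNorm {N : ℕ} (H : Euc N → ℝ) : Prop where
  nonneg : ∀ ξ, 0 ≤ H ξ
  convexOn : ConvexOn ℝ Set.univ H
  smooth : ContDiffOn ℝ 2 H {(0 : Euc N)}ᶜ
  homog : ∀ (t : ℝ) (ξ : Euc N), H (t • ξ) = |t| * H ξ
  bounds : ∃ a b : ℝ, 0 < a ∧ a ≤ b ∧ ∀ ξ : Euc N, a * ‖ξ‖ ≤ H ξ ∧ H ξ ≤ b * ‖ξ‖
  hessPosDef : ∀ ξ : Euc N, ξ ≠ 0 → ∀ v : Euc N, v ≠ 0 →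
    0 < iteratedFDeriv ℝ 2 (fun x => (H x) ^ 2) ξ ![v, v]

/-- The polar function `H⁰(x) = sup_{ξ ≠ 0} (ξ·x)/H(ξ)` of a Finsler norm. -/
def polarNorm {N : ℕ} (H : Euc N → ℝ) (x : Euc N) : ℝ :=
  sSup {r : ℝ | ∃ ξ : Euc N, ξ ≠ 0 ∧ r = ⟪ξ, x⟫ / H ξ}

/-- `u ∈ C_c^∞(Ω)`: a smooth function with compact support contained in `Ω`. -/
def IsTestFun {N : ℕ} (Ω : Set (Euc N)) (u : Euc N → ℝ) : Prop :=
  ContDiff ℝ (⊤ : ℕ∞) u ∧ HasCompactSupport u ∧ tsupport u ⊆ Ω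

/-! ### The Euler derivative -/

section EulerDerivative

variable {E : Type*} [NormedAddCommGroup E] [NormedSpace ℝ E] {u : E → ℝ}

/-- The Euler derivative `x · ∇u(x)`, the generator of the dilations `u ↦ u(e^τ ·)`. -/
def eulerDeriv (u : E → ℝ) (x : E) : ℝ :=
  fderiv ℝ u x x

lemma continuous_eulerDeriv (hu : ContDiff ℝ 1 u) : Continuous (eulerDeriv u) :=
  (hu.continuous_fderiv one_ne_zero).clm_apply continuous_id

lemma support_eulerDeriv_subset (u : E → ℝ) : Function.support (eulerDeriv u) ⊆ tsupport u :=
  fun x hx ↦ support_fderiv_subset ℝ fun h ↦ hx (by simp [eulerDeriv, h])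

lemma hasCompactSupport_eulerDeriv (hc : HasCompactSupport u) :
    HasCompactSupport (eulerDeriv u) :=
  .of_support_subset_isCompact hc.isCompact (support_eulerDeriv_subset u)

lemma hasDerivAt_comp_exp_smul (hu : Differentiable ℝ u) (x : E) (τ : ℝ) :
    HasDerivAt (fun τ ↦ u (Real.exp τ • x)) (eulerDeriv u (Real.exp τ • x)) τ :=
  (hu _).hasFDerivAt.comp_hasDerivAt τ ((Real.hasDerivAt_exp τ).smul_const x)

lemma eulerDeriv_abs_rpow {p : ℝ} (hp : 1 < p) {x : E} (hu : DifferentiableAt ℝ u x) :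
    eulerDeriv (fun y ↦ |u y| ^ p) x = p * |u x| ^ (p - 2) * u x * eulerDeriv u x := by
  have h : HasFDerivAt (fun y ↦ |u y| ^ p) ((p * |u x| ^ (p - 2) * u x) • fderiv ℝ u x) x :=
    (hasDerivAt_abs_rpow (u x) hp).comp_hasFDerivAt x hu.hasFDerivAt
  simp [eulerDeriv, h.fderiv]

lemma eq_zero_of_eulerDeriv_eq_mul (hu : Differentiable ℝ u) (hc : HasCompactSupport u) {c : ℝ}
    (hc0 : c ≠ 0) (h : ∀ x, eulerDeriv u x = c * u x) : u = 0 := by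
  funext x
  rcases eq_or_ne x 0 with rfl | hx
  · simpa [eulerDeriv, hc0] using (h 0).symm
  have hderiv (τ : ℝ) :
      HasDerivAt (fun τ ↦ Real.exp (-c * τ) * u (Real.exp τ • x)) 0 τ := by
    have hexp : HasDerivAt (fun τ ↦ Real.exp (-c * τ)) (Real.exp (-c * τ) * -c) τ := by
      simpa using ((hasDerivAt_id τ).const_mul (-c)).exp
    convert! hexp.mul (hasDerivAt_comp_exp_smul hu x τ) using 1
    rw [h]
    ring
  obtain ⟨R, hR⟩ := hc.isBounded.exists_norm_le
  obtain ⟨τ, hτ⟩ : ∃ τ, R < Real.exp τ * ‖x‖ :=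
    ((Real.tendsto_exp_atTop.atTop_mul_const (norm_pos_iff.2 hx)).eventually_gt_atTop R).exists
  have hzero : u (Real.exp τ • x) = 0 := by
    by_contra hne
    have := hR _ (subset_tsupport u hne)
    rw [norm_smul, Real.norm_of_nonneg (Real.exp_pos τ).le] at this
    exact this.not_gt hτ
  have hconst := is_const_of_deriv_eq_zero (fun τ ↦ (hderiv τ).differentiableAt)
    (fun τ ↦ (hderiv τ).deriv) 0 τ
  simpa [hzero] using hconst

end EulerDerivative

/-! ### Integrals of powers -/

section AbsRpow

variable {X : Type*} [TopologicalSpace X] {v : X → ℝ} {p : ℝ}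

lemma continuous_abs_rpow (hv : Continuous v) (hp : 0 ≤ p) : Continuous fun x ↦ |v x| ^ p :=
  hv.abs.rpow_const fun _ ↦ .inr hp

lemma hasCompactSupport_abs_rpow (hc : HasCompactSupport v) (hp : p ≠ 0) :
    HasCompactSupport fun x ↦ |v x| ^ p :=
  hc.comp_left (g := fun y ↦ |y| ^ p) (by simp [Real.zero_rpow hp])

variable [MeasurableSpace X] [OpensMeasurableSpace X] {ν : Measure X}
  [IsFiniteMeasureOnCompacts ν]

lemma integrable_abs_rpow (hv : Continuous v) (hc : HasCompactSupport v) (hp : 0 < p) :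
    Integrable (fun x ↦ |v x| ^ p) ν :=
  (continuous_abs_rpow hv hp.le).integrable_of_hasCompactSupport
    (hasCompactSupport_abs_rpow hc hp.ne')

lemma integral_abs_rpow_pos [ν.IsOpenPosMeasure] (hv : Continuous v) (hc : HasCompactSupport v)
    (hne : v ≠ 0) (hp : 0 < p) : 0 < ∫ x, |v x| ^ p ∂ν := by
  obtain ⟨x, hx⟩ := Function.ne_iff.1 hne
  exact (continuous_abs_rpow hv hp.le).integral_pos_of_hasCompactSupport_nonneg_nonzero
    (hasCompactSupport_abs_rpow hc hp.ne') (fun _ ↦ by positivity)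
    (Real.rpow_pos_of_pos (abs_pos.2 hx) p).ne'

lemma continuousOn_integral_abs_rpow {Y : Type*} [TopologicalSpace Y] {K : Set X} (hK : IsCompact K)
    {s : Set Y} {f : Y → X → ℝ} {q : Y → ℝ} (hf : ContinuousOn f.uncurry (s ×ˢ univ))
    (hfK : ∀ y ∈ s, ∀ x ∉ K, f y x = 0) (hq : ContinuousOn q s) (hq0 : ∀ y ∈ s, 0 < q y) :
    ContinuousOn (fun y ↦ ∫ x, |f y x| ^ q y ∂ν) s := by
  refine continuousOn_integral_of_compact_support hK ?_ fun y x hy hx ↦ ?_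
  · exact hf.abs.rpow (hq.comp continuousOn_fst fun z hz ↦ hz.1) fun z hz ↦ .inr (hq0 _ hz.1)
  · simp [hfK y hy x hx, Real.zero_rpow (hq0 y hy).ne']

end AbsRpow

/-! ### Homogeneous measures -/

section HomogeneousMeasures

variable {E : Type*} [MeasurableSpace E] {ν : Measure E} {d : ℝ}

/-- A measure is homogeneous of degree `d` if dilating a set by `t > 0` multiplies its measure by
`t ^ d`. The exponent is negated because the push-forward by `x ↦ t • x` measures preimages. -/
def IsHomogeneousMeasure [SMul ℝ E] (ν : Measure E) (d : ℝ) : Prop :=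
  ∀ t : ℝ, 0 < t → ν.map (t • ·) = ENNReal.ofReal (t ^ (-d)) • ν

lemma IsHomogeneousMeasure.withDensity [SMul ℝ E] [MeasurableConstSMul ℝ E]
    (hν : IsHomogeneousMeasure ν d) {w : E → ℝ≥0∞} (hw : Measurable w) {e : ℝ}
    (hwe : ∀ t : ℝ, 0 < t → ∀ x, w (t • x) = ENNReal.ofReal (t ^ e) * w x) :
    IsHomogeneousMeasure (ν.withDensity w) (d + e) := by
  intro t ht
  have hwt (x : E) : w x = ENNReal.ofReal (t ^ (-e)) * w (t • x) := by
    rw [hwe t ht, ← mul_assoc, ← ENNReal.ofReal_mul (by positivity), ← Real.rpow_add ht]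
    simp
  ext s hs
  have hs' : MeasurableSet ((t • ·) ⁻¹' s : Set E) := measurable_const_smul t hs
  calc (ν.withDensity w).map (t • ·) s
      = ∫⁻ x in (t • ·) ⁻¹' s, ENNReal.ofReal (t ^ (-e)) * w (t • x) ∂ν := by
        rw [Measure.map_apply (measurable_const_smul t) hs, withDensity_apply _ hs']
        exact lintegral_congr fun x ↦ hwt x
    _ = ENNReal.ofReal (t ^ (-e)) * ∫⁻ x in s, w x ∂ν.map (t • ·) := by
        rw [lintegral_const_mul' _ _ ENNReal.ofReal_ne_top,
          setLIntegral_map hs hw (measurable_const_smul t)]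
    _ = (ENNReal.ofReal (t ^ (-(d + e))) • ν.withDensity w) s := by
        rw [hν t ht, Measure.restrict_smul, lintegral_smul_measure, smul_eq_mul, ← mul_assoc,
          ← ENNReal.ofReal_mul (by positivity), ← Real.rpow_add ht, Measure.smul_apply,
          withDensity_apply _ hs, smul_eq_mul]
        congr 3
        ring

variable [NormedAddCommGroup E] [NormedSpace ℝ E] [BorelSpace E]

lemma isHomogeneousMeasure_addHaar [FiniteDimensional ℝ E] (μ : Measure E) [μ.IsAddHaarMeasure] :
    IsHomogeneousMeasure μ (Module.finrank ℝ E) := by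
  intro t ht
  rw [Measure.map_addHaar_smul μ ht.ne', abs_of_pos (by positivity), Real.rpow_neg ht.le,
    Real.rpow_natCast]

lemma IsHomogeneousMeasure.integral_comp_smul (hν : IsHomogeneousMeasure ν d) {t : ℝ} (ht : 0 < t)
    (f : E → ℝ) : ∫ x, f (t • x) ∂ν = t ^ (-d) * ∫ x, f x ∂ν := by
  have hemb : MeasurableEmbedding fun x : E ↦ t • x :=
    (Homeomorph.smulOfNeZero t ht.ne').measurableEmbedding
  rw [← hemb.integral_map, hν t ht, integral_smul_measure, ENNReal.toReal_ofReal (by positivity),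
    smul_eq_mul]

lemma hasDerivAt_integral_comp_exp_smul [IsFiniteMeasureOnCompacts ν] {u : E → ℝ}
    (hu : ContDiff ℝ 1 u) (hc : HasCompactSupport u) :
    HasDerivAt (fun τ : ℝ ↦ ∫ x, u (Real.exp τ • x) ∂ν) (∫ x, eulerDeriv u x ∂ν) 0 := by
  have hcont (τ : ℝ) : Continuous fun x ↦ u (Real.exp τ • x) := by fun_prop
  have hDu := continuous_eulerDeriv hu
  obtain ⟨C, hC⟩ := (hasCompactSupport_eulerDeriv hc).exists_bound_of_continuous hDu
  set K : Set E := (fun z : ℝ × E ↦ Real.exp (-z.1) • z.2) '' (Icc (-1) 1 ×ˢ tsupport u)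
  have hK : IsCompact K := (isCompact_Icc.prod hc.isCompact).image (by fun_prop)
  have hbound (x : E) (τ : ℝ) (hτ : τ ∈ Icc (-1 : ℝ) 1) :
      ‖eulerDeriv u (Real.exp τ • x)‖ ≤ K.indicator (fun _ ↦ C) x := by
    by_cases hx : x ∈ K
    · simpa [hx] using hC (Real.exp τ • x)
    · have : eulerDeriv u (Real.exp τ • x) = 0 := by
        by_contra hne
        refine hx ⟨(τ, Real.exp τ • x), ⟨hτ, support_eulerDeriv_subset u hne⟩, ?_⟩
        simp [smul_smul, ← Real.exp_add]
      simp [hx, this]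
  convert! (hasDerivAt_integral_of_dominated_loc_of_deriv_le (x₀ := (0 : ℝ))
    (F' := fun τ x ↦ eulerDeriv u (Real.exp τ • x)) (Icc_mem_nhds (by norm_num) one_pos)
    (.of_forall fun τ ↦ (hcont τ).aestronglyMeasurable) ?_ ?_ (.of_forall hbound) ?_
    (.of_forall fun x τ _ ↦ hasDerivAt_comp_exp_smul (hu.differentiable one_ne_zero) x τ)).2
    using 1
  · simp
  · simpa using hu.continuous.integrable_of_hasCompactSupport hc
  · simpa using hDu.aestronglyMeasurable
  · exact (integrable_indicator_iff hK.measurableSet).2 (integrableOn_const hK.measure_lt_top.ne)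

/-- The divergence theorem for the dilation field. -/
lemma IsHomogeneousMeasure.integral_eulerDeriv [IsFiniteMeasureOnCompacts ν]
    (hν : IsHomogeneousMeasure ν d) {u : E → ℝ} (hu : ContDiff ℝ 1 u) (hc : HasCompactSupport u) :
    ∫ x, eulerDeriv u x ∂ν = -d * ∫ x, u x ∂ν := by
  refine (hasDerivAt_integral_comp_exp_smul hu hc).unique ?_
  have hscale : (fun τ : ℝ ↦ ∫ x, u (Real.exp τ • x) ∂ν) =
      fun τ ↦ Real.exp (-d * τ) * ∫ x, u x ∂ν := by
    funext τ
    rw [hν.integral_comp_smul (Real.exp_pos τ), ← Real.exp_mul, mul_comm τ]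
  rw [hscale]
  simpa using (((hasDerivAt_id (0 : ℝ)).const_mul (-d)).exp).mul_const (∫ x, u x ∂ν)

end HomogeneousMeasures

/-! ### The Hardy inequality for homogeneous measures -/

section HardyInequality

lemma add_mul_sub_lt_of_strictConvexOn_univ {f : ℝ → ℝ} (hf : StrictConvexOn ℝ univ f)
    {f' a b : ℝ} (hf' : HasDerivAt f f' a) (hab : b ≠ a) : f a + f' * (b - a) < f b := by
  rcases hab.lt_or_gt with hba | hab
  · have h := hf.slope_lt_of_hasDerivAt (mem_univ b) (mem_univ a) hba hf'
    rw [slope_def_field, div_lt_iff₀ (sub_pos.2 hba)] at h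
    linarith
  · have h := hf.lt_slope_of_hasDerivAt (mem_univ a) (mem_univ b) hab hf'
    rw [slope_def_field, lt_div_iff₀ (sub_pos.2 hab)] at h
    linarith

lemma abs_rpow_sub_two_mul_mul_self {p : ℝ} (hp : p ≠ 0) (y : ℝ) :
    |y| ^ (p - 2) * y * y = |y| ^ p := by
  rcases eq_or_ne y 0 with rfl | hy
  · simp [Real.zero_rpow hp]
  · rw [mul_assoc, ← abs_mul_abs_self y, ← sq, ← Real.rpow_natCast,
      ← Real.rpow_add (abs_pos.2 hy)]
    norm_num

lemma strictConvexOn_abs_rpow {p : ℝ} (hp : 1 < p) :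
    StrictConvexOn ℝ univ fun y : ℝ ↦ |y| ^ p := by
  have hp0 : 0 < p := one_pos.trans hp
  refine StrictMono.strictConvexOn_univ_of_deriv
    (continuous_abs.rpow_const fun _ ↦ .inr hp0.le) ?_
  rw [show deriv (fun y : ℝ ↦ |y| ^ p) = fun y ↦ p * |y| ^ (p - 2) * y from
    funext fun y ↦ (hasDerivAt_abs_rpow y hp).deriv]
  refine strictMono_of_odd_strictMonoOn_nonneg (by simp) fun y hy z hz hyz ↦ ?_
  have hderiv {x : ℝ} (hx : 0 ≤ x) : p * |x| ^ (p - 2) * x = p * x ^ (p - 1) := by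
    rcases hx.eq_or_lt with rfl | hx
    · simp [Real.zero_rpow (sub_ne_zero.2 hp.ne')]
    · rw [abs_of_pos hx, mul_assoc, ← Real.rpow_add_one hx.ne']
      ring_nf
  simp only [hderiv hy, hderiv hz]
  gcongr

variable {E : Type*} [NormedAddCommGroup E] [NormedSpace ℝ E] {u : E → ℝ} {p : ℝ}

/-- The Bregman divergence `|b|^p - |a|^p - p |a|^(p-2) a (b - a)` of `|·|^p` between
`b = x · ∇u(x)` and `a = -c u(x)`, with the mixed term written as the Euler derivative of
`|u|^p`. -/
def hardyDefect (p c : ℝ) (u : E → ℝ) (x : E) : ℝ :=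
  |eulerDeriv u x| ^ p + (p - 1) * c ^ p * |u x| ^ p +
    c ^ (p - 1) * eulerDeriv (fun y ↦ |u y| ^ p) x

lemma hardyDefect_eq_bregman (hp : 1 < p) {c : ℝ} (hc : 0 < c) {x : E}
    (hu : DifferentiableAt ℝ u x) :
    hardyDefect p c u x = |eulerDeriv u x| ^ p - (|-c * u x| ^ p +
      p * |-c * u x| ^ (p - 2) * (-c * u x) * (eulerDeriv u x - -c * u x)) := by
  have hp0 : p ≠ 0 := (one_pos.trans hp).ne'
  have hself := abs_rpow_sub_two_mul_mul_self hp0 (-c * u x)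
  have habs (q : ℝ) : |-c * u x| ^ q = c ^ q * |u x| ^ q := by
    rw [abs_mul, abs_neg, abs_of_pos hc, Real.mul_rpow hc.le (abs_nonneg _)]
  have hcpow : c ^ (p - 1) = c ^ (p - 2) * c := by
    rw [← Real.rpow_add_one hc.ne']
    ring_nf
  rw [hardyDefect, eulerDeriv_abs_rpow hp hu, hcpow]
  rw [habs, habs]
  rw [habs, habs] at hself
  linear_combination (-p) * hself

lemma hardyDefect_pos (hp : 1 < p) {c : ℝ} (hc : 0 < c) {x : E} (hu : DifferentiableAt ℝ u x)
    (hne : eulerDeriv u x ≠ -c * u x) : 0 < hardyDefect p c u x := by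
  rw [hardyDefect_eq_bregman hp hc hu]
  exact sub_pos.2 (add_mul_sub_lt_of_strictConvexOn_univ (strictConvexOn_abs_rpow hp)
    (hasDerivAt_abs_rpow _ hp) hne)

lemma hardyDefect_nonneg (hp : 1 < p) {c : ℝ} (hc : 0 < c) {x : E}
    (hu : DifferentiableAt ℝ u x) : 0 ≤ hardyDefect p c u x := by
  by_cases hne : eulerDeriv u x = -c * u x
  · simp [hardyDefect_eq_bregman hp hc hu, hne]
  · exact (hardyDefect_pos hp hc hu hne).le

variable [MeasurableSpace E] [BorelSpace E] {ν : Measure E} {d : ℝ}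
  [IsFiniteMeasureOnCompacts ν]

lemma integrable_hardyDefect (hp : 1 < p) (c : ℝ) (hu : ContDiff ℝ 1 u)
    (hc : HasCompactSupport u) : Integrable (hardyDefect p c u) ν := by
  have hp0 : 0 < p := one_pos.trans hp
  refine ((integrable_abs_rpow (continuous_eulerDeriv hu) (hasCompactSupport_eulerDeriv hc)
    hp0).add ((integrable_abs_rpow hu.continuous hc hp0).const_mul _)).add (.const_mul ?_ _)
  exact (continuous_eulerDeriv (hu.norm_rpow hp)).integrable_of_hasCompactSupport
    (hasCompactSupport_eulerDeriv (hasCompactSupport_abs_rpow hc hp0.ne'))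

lemma IsHomogeneousMeasure.integral_hardyDefect (hν : IsHomogeneousMeasure ν d) (hd : 0 < d)
    (hp : 1 < p) (hu : ContDiff ℝ 1 u) (hc : HasCompactSupport u) :
    ∫ x, hardyDefect p (d / p) u x ∂ν =
      ∫ x, |eulerDeriv u x| ^ p ∂ν - (d / p) ^ p * ∫ x, |u x| ^ p ∂ν := by
  have hp0 : 0 < p := one_pos.trans hp
  have hDu : Integrable (fun x ↦ |eulerDeriv u x| ^ p) ν :=
    integrable_abs_rpow (continuous_eulerDeriv hu) (hasCompactSupport_eulerDeriv hc) hp0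
  have hup : Integrable (fun x ↦ |u x| ^ p) ν := integrable_abs_rpow hu.continuous hc hp0
  have hup1 : ContDiff ℝ 1 fun x ↦ |u x| ^ p := hu.norm_rpow hp
  have hupc : HasCompactSupport fun x ↦ |u x| ^ p := hasCompactSupport_abs_rpow hc hp0.ne'
  have hDup : Integrable (eulerDeriv fun x ↦ |u x| ^ p) ν :=
    (continuous_eulerDeriv hup1).integrable_of_hasCompactSupport (hasCompactSupport_eulerDeriv hupc)
  have hpow : (d / p) ^ (p - 1) * d = p * (d / p) ^ p := by
    rw [Real.rpow_sub_one (by positivity)]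
    field_simp
  have hsum : Integrable (fun x ↦ |eulerDeriv u x| ^ p + (p - 1) * (d / p) ^ p * |u x| ^ p) ν :=
    hDu.add (hup.const_mul _)
  unfold hardyDefect
  rw [integral_add hsum (hDup.const_mul _), integral_add hDu (hup.const_mul _),
    integral_const_mul, integral_const_mul, hν.integral_eulerDeriv hup1 hupc]
  linear_combination (-∫ x, |u x| ^ p ∂ν) * hpow

lemma IsHomogeneousMeasure.hardy_le_of_one_lt (hν : IsHomogeneousMeasure ν d) (hd : 0 < d)
    (hp : 1 < p) (hu : ContDiff ℝ 1 u) (hc : HasCompactSupport u) :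
    (d / p) ^ p * ∫ x, |u x| ^ p ∂ν ≤ ∫ x, |eulerDeriv u x| ^ p ∂ν := by
  rw [← sub_nonneg, ← hν.integral_hardyDefect hd hp hu hc]
  exact integral_nonneg fun x ↦ hardyDefect_nonneg hp (div_pos hd (one_pos.trans hp))
    (hu.differentiable one_ne_zero x)

/-- For `p = 1` the function `|u|` need not be differentiable, so this case is obtained by letting
`p` decrease to `1`. -/
lemma IsHomogeneousMeasure.hardy_le (hν : IsHomogeneousMeasure ν d) (hd : 0 < d)
    (hp : 1 ≤ p) (hu : ContDiff ℝ 1 u) (hc : HasCompactSupport u) :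
    (d / p) ^ p * ∫ x, |u x| ^ p ∂ν ≤ ∫ x, |eulerDeriv u x| ^ p ∂ν := by
  have hpos : ∀ q ∈ Ici p, 0 < q := fun q hq ↦ one_pos.trans_le (hp.trans hq)
  have hcont (v : E → ℝ) (hv : Continuous v) (hvc : HasCompactSupport v) :
      ContinuousOn (fun q ↦ ∫ x, |v x| ^ q ∂ν) (Ici p) :=
    continuousOn_integral_abs_rpow (f := fun _ ↦ v) hvc.isCompact
      (hv.comp continuous_snd).continuousOn
      (fun _ _ _ hx ↦ image_eq_zero_of_notMem_tsupport hx) continuousOn_id hpos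
  have hconst : ContinuousOn (fun q : ℝ ↦ (d / q) ^ q) (Ici p) :=
    (continuousOn_const.div continuousOn_id fun q hq ↦ (hpos q hq).ne').rpow continuousOn_id
      fun q hq ↦ .inr (hpos q hq)
  refine ContinuousWithinAt.closure_le (s := Ioi p) (by simp)
    (((hconst.mul (hcont u hu.continuous hc)) p self_mem_Ici).mono Ioi_subset_Ici_self)
    ((hcont _ (continuous_eulerDeriv hu) (hasCompactSupport_eulerDeriv hc) p self_mem_Ici).mono
      Ioi_subset_Ici_self)
    fun q hq ↦ hν.hardy_le_of_one_lt hd (hp.trans_lt hq) hu hc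

lemma IsHomogeneousMeasure.hardy_lt [ν.IsOpenPosMeasure] (hν : IsHomogeneousMeasure ν d)
    (hd : 0 < d) (hp : 1 < p) (hu : ContDiff ℝ 1 u) (hc : HasCompactSupport u) (hne : u ≠ 0) :
    (d / p) ^ p * ∫ x, |u x| ^ p ∂ν < ∫ x, |eulerDeriv u x| ^ p ∂ν := by
  have hc0 : 0 < d / p := div_pos hd (one_pos.trans hp)
  have hdiff : Differentiable ℝ u := hu.differentiable one_ne_zero
  refine lt_of_le_of_ne (hν.hardy_le hd hp.le hu hc) fun heq ↦ hne ?_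
  have hzero : hardyDefect p (d / p) u =ᵐ[ν] 0 := by
    rw [← integral_eq_zero_iff_of_nonneg (fun x ↦ hardyDefect_nonneg hp hc0 (hdiff x))
      (integrable_hardyDefect hp _ hu hc), hν.integral_hardyDefect hd hp hu hc, heq, sub_self]
  have hae : eulerDeriv u =ᵐ[ν] fun x ↦ -(d / p) * u x := by
    filter_upwards [hzero] with x hx
    by_contra hne'
    exact (hardyDefect_pos hp hc0 (hdiff x) hne').ne' hx
  exact eq_zero_of_eulerDeriv_eq_mul hdiff hc (neg_ne_zero.2 hc0.ne') (congrFun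
    ((continuous_eulerDeriv hu).ae_eq_iff_eq ν (continuous_const.mul hu.continuous) |>.1 hae))

end HardyInequality

/-! ### Radial functions in logarithmic coordinates -/

section LogNorm

variable {E : Type*} [NormedAddCommGroup E] [MeasurableSpace E] [BorelSpace E]
  {ν : Measure E} {d : ℝ}

lemma isFiniteMeasureOnCompacts_map_log_norm_withDensity [ProperSpace E]
    [IsFiniteMeasureOnCompacts ν] (hd : 0 < d) : IsFiniteMeasureOnCompacts
      ((ν.withDensity fun x ↦ ENNReal.ofReal (‖x‖ ^ (-d))).map fun x ↦ Real.log ‖x‖) := by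
  have hlog : Measurable fun x : E ↦ Real.log ‖x‖ := by fun_prop
  refine ⟨fun K hK ↦ ?_⟩
  obtain ⟨a, ha⟩ := hK.bddBelow
  obtain ⟨b, hb⟩ := hK.bddAbove
  rw [Measure.map_apply hlog hK.measurableSet, withDensity_apply _ (hlog hK.measurableSet)]
  have hsub : (fun x : E ↦ Real.log ‖x‖) ⁻¹' K ⊆ Metric.closedBall 0 (Real.exp b) := by
    intro x hx
    rcases eq_or_ne x 0 with rfl | hx0
    · simpa using (Real.exp_pos b).le
    · simpa using (Real.log_le_iff_le_exp (norm_pos_iff.2 hx0)).1 (hb hx)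
  have hdensity : ∀ x ∈ (fun x : E ↦ Real.log ‖x‖) ⁻¹' K,
      ENNReal.ofReal (‖x‖ ^ (-d)) ≤ ENNReal.ofReal (Real.exp a ^ (-d)) := by
    intro x hx
    rcases eq_or_ne x 0 with rfl | hx0
    · simp [Real.zero_rpow (neg_ne_zero.2 hd.ne')]
    · exact ENNReal.ofReal_le_ofReal (Real.rpow_le_rpow_of_nonpos (Real.exp_pos a)
        ((Real.le_log_iff_exp_le (norm_pos_iff.2 hx0)).1 (ha hx)) (neg_nonpos.2 hd.le))
  calc ∫⁻ x in (fun x : E ↦ Real.log ‖x‖) ⁻¹' K, ENNReal.ofReal (‖x‖ ^ (-d)) ∂ν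
      ≤ ∫⁻ _ in (fun x : E ↦ Real.log ‖x‖) ⁻¹' K, ENNReal.ofReal (Real.exp a ^ (-d)) ∂ν :=
        setLIntegral_mono measurable_const hdensity
    _ = ENNReal.ofReal (Real.exp a ^ (-d)) * ν ((fun x : E ↦ Real.log ‖x‖) ⁻¹' K) :=
        setLIntegral_const _ _
    _ < ∞ := ENNReal.mul_lt_top ENNReal.ofReal_lt_top
        ((measure_mono hsub).trans_lt (isCompact_closedBall _ _).measure_lt_top)

variable [NormedSpace ℝ E]

lemma IsHomogeneousMeasure.isAddLeftInvariant_map_log_norm (hν : IsHomogeneousMeasure ν 0)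
    (h0 : ν {0} = 0) : (ν.map fun x ↦ Real.log ‖x‖).IsAddLeftInvariant := by
  have hlog : Measurable fun x : E ↦ Real.log ‖x‖ := by fun_prop
  refine ⟨fun s ↦ ?_⟩
  calc (ν.map fun x ↦ Real.log ‖x‖).map (s + ·)
      = ν.map fun x ↦ s + Real.log ‖x‖ := Measure.map_map (measurable_const_add s) hlog
    _ = ν.map fun x ↦ Real.log ‖Real.exp s • x‖ := by
        refine Measure.map_congr ?_
        filter_upwards [compl_mem_ae_iff.2 h0] with x hx
        rw [norm_smul, Real.norm_of_nonneg (Real.exp_pos s).le,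
          Real.log_mul (Real.exp_pos s).ne' (norm_ne_zero_iff.2 hx), Real.log_exp]
    _ = (ν.map (Real.exp s • ·)).map fun x ↦ Real.log ‖x‖ :=
        (Measure.map_map hlog (measurable_const_smul _)).symm
    _ = ν.map fun x ↦ Real.log ‖x‖ := by simp [hν _ (Real.exp_pos s)]

lemma IsHomogeneousMeasure.exists_integral_log_norm_eq [ProperSpace E]
    [IsFiniteMeasureOnCompacts ν] (hν : IsHomogeneousMeasure ν d) (hd : 0 < d) :
    ∃ A : ℝ, ∀ ψ : ℝ → ℝ, Continuous ψ →
      ∫ x, ‖x‖ ^ (-d) * ψ (Real.log ‖x‖) ∂ν = A * ∫ s, ψ s := by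
  set w : E → ℝ≥0∞ := fun x ↦ ENNReal.ofReal (‖x‖ ^ (-d))
  have hw : Measurable w := by fun_prop
  have hlog : Measurable fun x : E ↦ Real.log ‖x‖ := by fun_prop
  have hinv : IsHomogeneousMeasure (ν.withDensity w) 0 := by
    rw [← add_neg_cancel d]
    refine hν.withDensity hw fun t ht x ↦ ?_
    simp only [w, norm_smul, Real.norm_of_nonneg ht.le]
    rw [Real.mul_rpow ht.le (norm_nonneg x), ENNReal.ofReal_mul (by positivity)]
  have h0 : ν.withDensity w {0} = 0 := by
    simp [w, Real.zero_rpow (neg_ne_zero.2 hd.ne')]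
  have := hinv.isAddLeftInvariant_map_log_norm h0
  have : IsFiniteMeasureOnCompacts ((ν.withDensity w).map fun x ↦ Real.log ‖x‖) :=
    isFiniteMeasureOnCompacts_map_log_norm_withDensity hd
  obtain ⟨A, hA⟩ : ∃ A : ℝ≥0, ((ν.withDensity w).map fun x ↦ Real.log ‖x‖) = A • volume :=
    ⟨_, Measure.isAddLeftInvariant_eq_smul _ _⟩
  refine ⟨A, fun ψ hψ ↦ ?_⟩
  calc ∫ x, ‖x‖ ^ (-d) * ψ (Real.log ‖x‖) ∂ν
      = ∫ x, ψ (Real.log ‖x‖) ∂ν.withDensity w := by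
        rw [integral_withDensity_eq_integral_toReal_smul hw (by simp [w])]
        refine integral_congr_ae (.of_forall fun x ↦ ?_)
        simp [w, ENNReal.toReal_ofReal (Real.rpow_nonneg (norm_nonneg x) _)]
    _ = ∫ s, ψ s ∂(ν.withDensity w).map fun x ↦ Real.log ‖x‖ :=
        (integral_map hlog.aemeasurable hψ.aestronglyMeasurable).symm
    _ = A * ∫ s, ψ s := by
        rw [hA, integral_smul_nnreal_measure, NNReal.smul_def, smul_eq_mul]

end LogNorm

section RadialLift

variable {E : Type*} [NormedAddCommGroup E]

/-- The radial function `‖x‖ ^ (-c) χ(log ‖x‖)`, a truncation of the virtual extremal `‖x‖ ^ (-c)`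
of the Hardy inequality. For `c ≠ 0` it vanishes at the origin, since `0 ^ (-c) = 0`. -/
def radialLift (c : ℝ) (χ : ℝ → ℝ) (x : E) : ℝ :=
  ‖x‖ ^ (-c) * χ (Real.log ‖x‖)

variable {c : ℝ} {χ : ℝ → ℝ}

lemma radialLift_zero (hc : c ≠ 0) : radialLift c χ (0 : E) = 0 := by
  simp [radialLift, Real.zero_rpow (neg_ne_zero.2 hc)]

lemma abs_radialLift_rpow (p : ℝ) (x : E) :
    |radialLift c χ x| ^ p = ‖x‖ ^ (-(c * p)) * |χ (Real.log ‖x‖)| ^ p := by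
  rw [radialLift, abs_mul, abs_of_nonneg (by positivity), Real.mul_rpow (by positivity)
    (abs_nonneg _), ← Real.rpow_mul (norm_nonneg x), neg_mul]

lemma radialLift_ne_zero [NormedSpace ℝ E] [Nontrivial E] (hχ : χ ≠ 0) :
    radialLift (E := E) c χ ≠ 0 := by
  obtain ⟨s, hs⟩ := Function.ne_iff.1 hχ
  obtain ⟨x, hx⟩ := exists_norm_eq E (Real.exp_pos s).le
  refine Function.ne_iff.2 ⟨x, mul_ne_zero ?_ ?_⟩
  · rw [hx]
    positivity
  · simpa [hx] using hs

lemma tsupport_radialLift_subset (hc : c ≠ 0) {r : ℝ} (hχ : ∀ s, χ s ≠ 0 → s < Real.log r)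
    (hr : 0 < r) : tsupport (radialLift (E := E) c χ) ⊆ Metric.closedBall 0 r := by
  refine closure_minimal (fun x hx ↦ ?_) Metric.isClosed_closedBall
  have hx0 : x ≠ 0 := fun h ↦ hx (h ▸ radialLift_zero hc)
  have hlog := hχ _ (right_ne_zero_of_mul hx)
  simpa using ((Real.log_lt_log_iff (norm_pos_iff.2 hx0) hr).1 hlog).le

variable [InnerProductSpace ℝ E]

lemma contDiff_radialLift {n : WithTop ℕ∞} (hc : c ≠ 0) (hχ : ContDiff ℝ n χ)
    (hχc : HasCompactSupport χ) : ContDiff ℝ n (radialLift (E := E) c χ) := by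
  refine contDiff_iff_contDiffAt.2 fun x ↦ ?_
  rcases eq_or_ne x 0 with rfl | hx
  · obtain ⟨R, hR⟩ := hχc.isBounded.exists_norm_le
    refine contDiffAt_const (c := (0 : ℝ)) |>.congr_of_eventuallyEq ?_
    filter_upwards [Metric.ball_mem_nhds (0 : E) (Real.exp_pos (-R))] with y hy
    rcases eq_or_ne y 0 with rfl | hy0
    · exact radialLift_zero hc
    have hlog : Real.log ‖y‖ < -R :=
      (Real.log_lt_iff_lt_exp (norm_pos_iff.2 hy0)).2 (mem_ball_zero_iff.1 hy)
    have hχy : χ (Real.log ‖y‖) = 0 := by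
      by_contra hne
      exact (abs_le.1 (hR _ (subset_tsupport χ hne))).1.not_gt hlog
    simp [radialLift, hχy]
  · have hnorm : ContDiffAt ℝ n (fun y : E ↦ ‖y‖) x := contDiffAt_norm ℝ hx
    exact (hnorm.rpow_const_of_ne (norm_ne_zero_iff.2 hx)).mul
      (hχ.contDiffAt.comp x (hnorm.log (norm_ne_zero_iff.2 hx)))

lemma eulerDeriv_radialLift (hc : c ≠ 0) (hχ : ContDiff ℝ 1 χ) (hχc : HasCompactSupport χ) :
    eulerDeriv (radialLift (E := E) c χ) = radialLift c fun s ↦ deriv χ s - c * χ s := by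
  funext x
  rcases eq_or_ne x 0 with rfl | hx
  · simp [eulerDeriv, radialLift_zero hc]
  have hx0 : 0 < ‖x‖ := norm_pos_iff.2 hx
  have hscale : (fun τ ↦ radialLift c χ (Real.exp τ • x)) =
      fun τ ↦ ‖x‖ ^ (-c) * (Real.exp (-c * τ) * χ (τ + Real.log ‖x‖)) := by
    funext τ
    rw [radialLift, norm_smul, Real.norm_of_nonneg (Real.exp_pos τ).le,
      Real.mul_rpow (Real.exp_pos τ).le hx0.le, Real.log_mul (Real.exp_pos τ).ne' hx0.ne',
      Real.log_exp, ← Real.exp_mul, mul_comm τ]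
    ring
  have hexp : HasDerivAt (fun τ ↦ Real.exp (-c * τ)) (-c) 0 := by
    simpa using ((hasDerivAt_id (0 : ℝ)).const_mul (-c)).exp
  have hχ' : HasDerivAt (fun τ ↦ χ (τ + Real.log ‖x‖)) (deriv χ (Real.log ‖x‖)) 0 := by
    simpa using (hχ.differentiable one_ne_zero (0 + Real.log ‖x‖)).hasDerivAt.comp_add_const
      (0 : ℝ) (Real.log ‖x‖)
  have hderiv := hasDerivAt_comp_exp_smul
    ((contDiff_radialLift hc hχ hχc).differentiable one_ne_zero) x 0
  rw [hscale] at hderiv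
  simpa [radialLift, sub_eq_neg_add] using hderiv.unique ((hexp.mul hχ').const_mul (‖x‖ ^ (-c)))

end RadialLift

/-! ### Sharpness of the Hardy constant -/

section Sharpness

variable {p c q : ℝ} {χ : ℝ → ℝ}

lemma continuous_integral_abs_mul_deriv_sub_rpow (hp : 0 < p) (c : ℝ) (hχ : ContDiff ℝ 1 χ)
    (hχc : HasCompactSupport χ) : Continuous fun ε ↦ ∫ t, |ε * deriv χ t - c * χ t| ^ p := by
  have hf : Continuous fun z : ℝ × ℝ ↦ z.1 * deriv χ z.2 - c * χ z.2 :=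
    (continuous_fst.mul ((hχ.continuous_deriv le_rfl).comp continuous_snd)).sub
      (continuous_const.mul (hχ.continuous.comp continuous_snd))
  rw [← continuousOn_univ]
  refine continuousOn_integral_abs_rpow (q := fun _ ↦ p) hχc.isCompact
    hf.continuousOn (fun ε _ t ht ↦ ?_) continuousOn_const fun _ _ ↦ hp
  have hderiv : deriv χ t = 0 := Function.notMem_support.1 fun h ↦ ht (support_deriv_subset h)
  simp [hderiv, image_eq_zero_of_notMem_tsupport ht]

lemma integral_comp_mul_sub {ε : ℝ} (hε : 0 < ε) (R : ℝ) (f : ℝ → ℝ) :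
    ∫ s, f (ε * (s - R)) = ε⁻¹ * ∫ t, f t := by
  rw [integral_sub_right_eq_self (fun s ↦ f (ε * s)), Measure.integral_comp_mul_left,
    abs_of_pos (inv_pos.2 hε), smul_eq_mul]

lemma exists_integral_abs_deriv_sub_rpow_lt (hp : 0 < p) (hc : 0 ≤ c) (hq : c ^ p < q) (R : ℝ) :
    ∃ χ : ℝ → ℝ, ContDiff ℝ (⊤ : ℕ∞) χ ∧ HasCompactSupport χ ∧ χ ≠ 0 ∧ (∀ s, χ s ≠ 0 → s < R) ∧
      ∫ s, |deriv χ s - c * χ s| ^ p < q * ∫ s, |χ s| ^ p := by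
  obtain ⟨χ, hsupp, hχc, hχ, -, hχ1⟩ :=
    exists_contDiff_tsupport_subset (n := (⊤ : ℕ∞)) (Iio_mem_nhds (neg_one_lt_zero (R := ℝ)))
  have hpos : 0 < ∫ t, |χ t| ^ p := integral_abs_rpow_pos hχ.continuous hχc
    (Function.ne_iff.2 ⟨-1, by simp [hχ1]⟩) hp
  have hlim : ∫ t, |0 * deriv χ t - c * χ t| ^ p < q * ∫ t, |χ t| ^ p := by
    calc ∫ t, |0 * deriv χ t - c * χ t| ^ p = c ^ p * ∫ t, |χ t| ^ p := by
          simp [abs_mul, abs_of_nonneg hc, Real.mul_rpow hc, integral_const_mul]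
      _ < q * ∫ t, |χ t| ^ p := by gcongr
  have hev : ∀ᶠ ε in 𝓝[>] (0 : ℝ),
      ∫ t, |ε * deriv χ t - c * χ t| ^ p < q * ∫ t, |χ t| ^ p :=
    ((continuous_integral_abs_mul_deriv_sub_rpow hp c (hχ.of_le (by simp)) hχc).tendsto 0
      |>.mono_left nhdsWithin_le_nhds).eventually_lt_const hlim
  obtain ⟨ε, hε, hε0 : 0 < ε⟩ := (hev.and self_mem_nhdsWithin).exists
  have hderiv (s : ℝ) : deriv (fun s ↦ χ (ε * (s - R))) s = ε * deriv χ (ε * (s - R)) := by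
    rw [deriv_comp_sub_const (fun s ↦ χ (ε * s)), deriv_comp_mul_left, smul_eq_mul]
  refine ⟨fun s ↦ χ (ε * (s - R)), hχ.comp (by fun_prop), ?_, ?_, fun s hs ↦ ?_, ?_⟩
  · exact hχc.comp_homeomorph ((Homeomorph.subRight R).trans (Homeomorph.mulLeft₀ ε hε0.ne'))
  · refine Function.ne_iff.2 ⟨-ε⁻¹ + R, ?_⟩
    simp [hε0.ne', hχ1]
  · exact sub_neg.1 ((pos_iff_neg_of_mul_neg (hsupp (subset_tsupport χ hs))).1 hε0)
  · simp only [hderiv]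
    rw [integral_comp_mul_sub hε0 R fun t ↦ |ε * deriv χ t - c * χ t| ^ p,
      integral_comp_mul_sub hε0 R fun t ↦ |χ t| ^ p, mul_left_comm]
    gcongr

variable {E : Type*} [NormedAddCommGroup E] [InnerProductSpace ℝ E] [MeasurableSpace E]
  [BorelSpace E] [ProperSpace E] {ν : Measure E} {d : ℝ} [IsFiniteMeasureOnCompacts ν]

lemma IsHomogeneousMeasure.exists_integral_abs_radialLift_rpow (hν : IsHomogeneousMeasure ν d)
    (hd : 0 < d) (hp : 0 < p) : ∃ A : ℝ, ∀ χ : ℝ → ℝ, Continuous χ →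
      ∫ x, |radialLift (d / p) χ x| ^ p ∂ν = A * ∫ s, |χ s| ^ p := by
  obtain ⟨A, hA⟩ := hν.exists_integral_log_norm_eq hd
  refine ⟨A, fun χ hχ ↦ ?_⟩
  simp only [abs_radialLift_rpow, div_mul_cancel₀ d hp.ne']
  exact hA _ (continuous_abs_rpow hχ hp.le)

lemma IsHomogeneousMeasure.exists_hardy_lt [Nontrivial E] [ν.IsOpenPosMeasure]
    (hν : IsHomogeneousMeasure ν d) (hd : 0 < d) (hp : 0 < p) (hq : (d / p) ^ p < q) {Ω : Set E}
    (hΩ : Ω ∈ 𝓝 0) : ∃ u : E → ℝ, ContDiff ℝ (⊤ : ℕ∞) u ∧ HasCompactSupport u ∧ tsupport u ⊆ Ω ∧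
      u ≠ 0 ∧ ∫ x, |eulerDeriv u x| ^ p ∂ν < q * ∫ x, |u x| ^ p ∂ν := by
  obtain ⟨r, hr, hrΩ⟩ := Metric.nhds_basis_closedBall.mem_iff.1 hΩ
  have hc : 0 < d / p := div_pos hd hp
  obtain ⟨A, hA⟩ := hν.exists_integral_abs_radialLift_rpow hd hp
  obtain ⟨χ, hχ, hχc, hne, hχr, hlt⟩ :=
    exists_integral_abs_deriv_sub_rpow_lt hp hc.le hq (Real.log r)
  have hχ1 : ContDiff ℝ 1 χ := hχ.of_le (by simp)
  have hsupp : tsupport (radialLift (E := E) (d / p) χ) ⊆ Metric.closedBall 0 r :=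
    tsupport_radialLift_subset hc.ne' hχr hr
  have hsmooth := contDiff_radialLift (E := E) hc.ne' hχ hχc
  have hcpt : HasCompactSupport (radialLift (E := E) (d / p) χ) :=
    (isCompact_closedBall 0 r).of_isClosed_subset (isClosed_tsupport _) hsupp
  have hpos : 0 < A * ∫ s, |χ s| ^ p := by
    rw [← hA χ hχ.continuous]
    exact integral_abs_rpow_pos hsmooth.continuous hcpt (radialLift_ne_zero hne) hp
  have hA0 : 0 < A := pos_of_mul_pos_left hpos (integral_nonneg fun _ ↦ by positivity)
  refine ⟨radialLift (d / p) χ, hsmooth, hcpt, hsupp.trans hrΩ, radialLift_ne_zero hne, ?_⟩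
  have hDχ : Continuous fun s ↦ deriv χ s - d / p * χ s :=
    (hχ1.continuous_deriv le_rfl).sub (continuous_const.mul hχ.continuous)
  rw [eulerDeriv_radialLift hc.ne' hχ1 hχc, hA χ hχ.continuous, hA _ hDχ, mul_left_comm]
  gcongr

end Sharpness

/-! ### Homogeneous weights -/

section Gauge

/-- The measure `μ / g ^ p` on the right-hand side of the Hardy inequality. -/
def gaugeMeasure {X : Type*} [MeasurableSpace X] (μ : Measure X) (g : X → ℝ) (p : ℝ) : Measure X :=
  μ.withDensity fun x ↦ ENNReal.ofReal (g x ^ (-p))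

variable {E : Type*} [NormedAddCommGroup E] [NormedSpace ℝ E] [MeasurableSpace E]

/-- A measurable, positively homogeneous function bounded below by a multiple of the norm; it takes
the place of the polar norm `H⁰`. -/
structure IsGauge (g : E → ℝ) : Prop where
  measurable : Measurable g
  smul : ∀ t : ℝ, 0 < t → ∀ x, g (t • x) = t * g x
  exists_mul_norm_le : ∃ a : ℝ, 0 < a ∧ ∀ x, a * ‖x‖ ≤ g x

variable {g : E → ℝ} {p : ℝ} {μ : Measure E}

lemma IsGauge.pos (hg : IsGauge g) {x : E} (hx : x ≠ 0) : 0 < g x := by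
  obtain ⟨a, ha, hag⟩ := hg.exists_mul_norm_le
  exact (mul_pos ha (norm_pos_iff.2 hx)).trans_le (hag x)

lemma IsGauge.nonneg (hg : IsGauge g) (x : E) : 0 ≤ g x := by
  obtain ⟨a, ha, hag⟩ := hg.exists_mul_norm_le
  exact (mul_nonneg ha.le (norm_nonneg x)).trans (hag x)

lemma IsGauge.zero (hg : IsGauge g) : g 0 = 0 := by
  have := hg.smul 2 two_pos 0
  rw [smul_zero] at this
  linarith

lemma IsGauge.integral_gaugeMeasure (hg : IsGauge g) (f : E → ℝ) :
    ∫ x, f x ∂gaugeMeasure μ g p = ∫ x, f x / g x ^ p ∂μ := by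
  have := hg.measurable
  rw [gaugeMeasure, integral_withDensity_eq_integral_toReal_smul (by fun_prop) (by simp)]
  refine integral_congr_ae (.of_forall fun x ↦ ?_)
  dsimp only
  rw [ENNReal.toReal_ofReal (Real.rpow_nonneg (hg.nonneg x) _), Real.rpow_neg (hg.nonneg x),
    smul_eq_mul, inv_mul_eq_div]

variable [BorelSpace E] [FiniteDimensional ℝ E] [μ.IsAddHaarMeasure]

lemma IsGauge.isHomogeneousMeasure_gaugeMeasure (hg : IsGauge g) :
    IsHomogeneousMeasure (gaugeMeasure μ g p) (Module.finrank ℝ E - p) := by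
  have := hg.measurable
  refine (isHomogeneousMeasure_addHaar μ).withDensity (by fun_prop) fun t ht x ↦ ?_
  rw [hg.smul t ht, Real.mul_rpow ht.le (hg.nonneg x), ENNReal.ofReal_mul (by positivity)]

lemma IsGauge.isFiniteMeasureOnCompacts_gaugeMeasure (hg : IsGauge g) (hp : 0 < p)
    (hpE : p < Module.finrank ℝ E) : IsFiniteMeasureOnCompacts (gaugeMeasure μ g p) := by
  obtain ⟨a, ha, hag⟩ := hg.exists_mul_norm_le
  have hbound (x : E) : ‖g x ^ (-p)‖ ≤ a ^ (-p) * ‖x‖ ^ (-p) := by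
    rw [Real.norm_of_nonneg (Real.rpow_nonneg (hg.nonneg x) _),
      ← Real.mul_rpow ha.le (norm_nonneg x)]
    rcases eq_or_ne x 0 with rfl | hx
    · simp [hg.zero]
    · exact Real.rpow_le_rpow_of_nonpos (by positivity) (hag x) (by linarith)
  have hdim : 1 ≤ Module.finrank ℝ E := by exact_mod_cast hp.trans hpE
  have hloc : LocallyIntegrable (fun x ↦ g x ^ (-p)) μ :=
    locallyIntegrable_of_norm_le_rpow hdim hpE (.of_forall hbound)
      (hg.measurable.pow_const _).aestronglyMeasurable
  refine ⟨fun K hK ↦ ?_⟩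
  rw [gaugeMeasure, withDensity_apply _ hK.measurableSet]
  exact (hloc.integrableOn_isCompact hK).lintegral_lt_top

lemma IsGauge.isOpenPosMeasure_gaugeMeasure [Nontrivial E] (hg : IsGauge g) :
    (gaugeMeasure μ g p).IsOpenPosMeasure := by
  have := hg.measurable
  refine (withDensity_absolutelyContinuous' (by fun_prop) ?_).isOpenPosMeasure
  filter_upwards [compl_mem_ae_iff.2 (measure_singleton (μ := μ) 0)] with x hx
  exact (ENNReal.ofReal_pos.2 (Real.rpow_pos_of_pos (hg.pos hx) _)).ne'

end Gauge

/-! ### The best constant -/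

section BestConstant

variable {E : Type*} [NormedAddCommGroup E] [MeasurableSpace E]

/-- The Hardy quotient of `u` for the weight `g`; the numerator is the `p`-energy of the derivative
along the field `x / g x`. -/
def hardyQuotient [NormedSpace ℝ E] (μ : Measure E) (g : E → ℝ) (p : ℝ) (Ω : Set E) (u : E → ℝ) :
    ℝ :=
  (∫ x in Ω, |fderiv ℝ u x ((g x)⁻¹ • x)| ^ p ∂μ) / ∫ x in Ω, |u x| ^ p / g x ^ p ∂μ

lemma IsGauge.hardyQuotient_eq [NormedSpace ℝ E] {μ : Measure E} {g : E → ℝ} (hg : IsGauge g)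
    {p : ℝ} (hp : p ≠ 0) {Ω : Set E} {u : E → ℝ} (hu : tsupport u ⊆ Ω) :
    hardyQuotient μ g p Ω u =
      (∫ x, |eulerDeriv u x| ^ p ∂gaugeMeasure μ g p) / ∫ x, |u x| ^ p ∂gaugeMeasure μ g p := by
  have hnum (x : E) : |fderiv ℝ u x ((g x)⁻¹ • x)| ^ p = |eulerDeriv u x| ^ p / g x ^ p := by
    rw [map_smul, smul_eq_mul, inv_mul_eq_div, abs_div, abs_of_nonneg (hg.nonneg x),
      Real.div_rpow (abs_nonneg _) (hg.nonneg x), eulerDeriv]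
  have hu0 {x : E} (hx : x ∉ Ω) : u x = 0 := image_eq_zero_of_notMem_tsupport fun h ↦ hx (hu h)
  have hDu0 {x : E} (hx : x ∉ Ω) : eulerDeriv u x = 0 :=
    Function.notMem_support.1 fun h ↦ hx (hu (support_eulerDeriv_subset u h))
  simp only [hardyQuotient, hnum, hg.integral_gaugeMeasure]
  congr 1 <;> refine setIntegral_eq_integral_of_forall_compl_eq_zero fun x hx ↦ ?_
  · simp [hDu0 hx, Real.zero_rpow hp]
  · simp [hu0 hx, Real.zero_rpow hp]

variable [InnerProductSpace ℝ E] [BorelSpace E] [FiniteDimensional ℝ E]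

theorem finsler_hardy_subcritical_best_constant_general
    (μ : Measure E) [μ.IsAddHaarMeasure] {g : E → ℝ} (hg : IsGauge g)
    {p : ℝ} (hp1 : 1 ≤ p) (hpE : p < Module.finrank ℝ E) {Ω : Set E} (hΩ : Ω ∈ 𝓝 0) :
    sInf {r : ℝ | ∃ u : E → ℝ, (ContDiff ℝ (⊤ : ℕ∞) u ∧ HasCompactSupport u ∧ tsupport u ⊆ Ω) ∧
        u ≠ 0 ∧ r = hardyQuotient μ g p Ω u} = ((Module.finrank ℝ E - p) / p) ^ p ∧
    (1 < p → ∀ u : E → ℝ, (ContDiff ℝ (⊤ : ℕ∞) u ∧ HasCompactSupport u ∧ tsupport u ⊆ Ω) →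
      u ≠ 0 → ((Module.finrank ℝ E - p) / p) ^ p < hardyQuotient μ g p Ω u) := by
  have hp : 0 < p := one_pos.trans_le hp1
  have hd : 0 < Module.finrank ℝ E - p := sub_pos.2 hpE
  have : Nontrivial E := Module.finrank_pos_iff.1 (by exact_mod_cast hp.trans hpE)
  have := hg.isFiniteMeasureOnCompacts_gaugeMeasure (μ := μ) hp hpE
  have := hg.isOpenPosMeasure_gaugeMeasure (μ := μ) (p := p)
  have hν := hg.isHomogeneousMeasure_gaugeMeasure (μ := μ) (p := p)
  have hpos {u : E → ℝ} (hu : ContDiff ℝ (⊤ : ℕ∞) u) (hc : HasCompactSupport u) (hne : u ≠ 0) :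
      0 < ∫ x, |u x| ^ p ∂gaugeMeasure μ g p := integral_abs_rpow_pos hu.continuous hc hne hp
  refine ⟨csInf_eq_of_forall_ge_of_forall_gt_exists_lt ?_ ?_ ?_, ?_⟩
  · obtain ⟨u, hu, hc, hsub, hne, -⟩ := hν.exists_hardy_lt hd hp (lt_add_one _) hΩ
    exact ⟨_, u, ⟨hu, hc, hsub⟩, hne, rfl⟩
  · rintro _ ⟨u, ⟨hu, hc, hsub⟩, hne, rfl⟩
    rw [hg.hardyQuotient_eq hp.ne' hsub, le_div_iff₀ (hpos hu hc hne)]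
    exact hν.hardy_le hd hp1 (hu.of_le (by simp)) hc
  · intro q hq
    obtain ⟨u, hu, hc, hsub, hne, hlt⟩ := hν.exists_hardy_lt hd hp hq hΩ
    refine ⟨_, ⟨u, ⟨hu, hc, hsub⟩, hne, rfl⟩, ?_⟩
    rwa [hg.hardyQuotient_eq hp.ne' hsub, div_lt_iff₀ (hpos hu hc hne)]
  · rintro hp1 u ⟨hu, hc, hsub⟩ hne
    rw [hg.hardyQuotient_eq hp.ne' hsub, lt_div_iff₀ (hpos hu hc hne)]
    exact hν.hardy_lt hd hp1 (hu.of_le (by simp)) hc hne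

end BestConstant

/-! ### The polar norm -/

section PolarNorm

variable {N : ℕ} {H : Euc N → ℝ}

lemma polarNorm_eq_iSup (H : Euc N → ℝ) (x : Euc N) :
    polarNorm H x = ⨆ ξ : {ξ : Euc N // ξ ≠ 0}, ⟪(ξ : Euc N), x⟫ / H ξ := by
  rw [polarNorm, iSup]
  congr 1
  ext r
  simp [eq_comm]

lemma bddAbove_range_inner_div {a : ℝ} (ha : 0 < a) (haH : ∀ ξ, a * ‖ξ‖ ≤ H ξ) (x : Euc N) :
    BddAbove (range fun ξ : {ξ : Euc N // ξ ≠ 0} ↦ ⟪(ξ : Euc N), x⟫ / H ξ) := by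
  refine ⟨‖x‖ / a, ?_⟩
  rintro _ ⟨⟨ξ, hξ⟩, rfl⟩
  have hξ0 : 0 < ‖ξ‖ := norm_pos_iff.2 hξ
  calc ⟪ξ, x⟫ / H ξ ≤ ‖ξ‖ * ‖x‖ / (a * ‖ξ‖) :=
        div_le_div₀ (by positivity) (real_inner_le_norm ξ x) (mul_pos ha hξ0) (haH ξ)
    _ = ‖x‖ / a := by rw [mul_comm a, mul_div_mul_left _ _ hξ0.ne']

lemma inv_mul_norm_le_polarNorm {a b : ℝ} (ha : 0 < a) (haH : ∀ ξ, a * ‖ξ‖ ≤ H ξ)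
    (hHb : ∀ ξ, H ξ ≤ b * ‖ξ‖) (x : Euc N) : b⁻¹ * ‖x‖ ≤ polarNorm H x := by
  rw [polarNorm_eq_iSup]
  rcases eq_or_ne x 0 with rfl | hx
  · simp
  have hx0 : 0 < ‖x‖ := norm_pos_iff.2 hx
  have hHx : 0 < H x := (mul_pos ha hx0).trans_le (haH x)
  calc b⁻¹ * ‖x‖ = ‖x‖ ^ 2 / (b * ‖x‖) := by field_simp
    _ ≤ ⟪x, x⟫ / H x := by
        rw [real_inner_self_eq_norm_sq]
        gcongr
        exact hHb x
    _ ≤ ⨆ ξ : {ξ : Euc N // ξ ≠ 0}, ⟪(ξ : Euc N), x⟫ / H ξ :=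
        le_ciSup (bddAbove_range_inner_div ha haH x) ⟨x, hx⟩

lemma isGauge_polarNorm {a b : ℝ} (ha : 0 < a) (hb : 0 < b) (haH : ∀ ξ, a * ‖ξ‖ ≤ H ξ)
    (hHb : ∀ ξ, H ξ ≤ b * ‖ξ‖) : IsGauge (polarNorm H) where
  measurable := by
    rw [funext (polarNorm_eq_iSup H)]
    exact (lowerSemicontinuous_ciSup (bddAbove_range_inner_div ha haH)
      fun ξ ↦ (by fun_prop : Continuous _).lowerSemicontinuous).measurable
  smul t ht x := by
    simp only [polarNorm_eq_iSup, inner_smul_right, mul_div_assoc, Real.mul_iSup_of_nonneg ht.le]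
  exists_mul_norm_le := ⟨b⁻¹, inv_pos.2 hb, inv_mul_norm_le_polarNorm ha haH hHb⟩

end PolarNorm

/-- The best constant in the anisotropic subcritical Hardy inequality on a domain
containing the origin is ((N-p)/p)^p, and for 1 < p < N it is not attained. -/
theorem finsler_hardy_subcritical_best_constant
    (N : ℕ) (hN : 2 ≤ N) (H : Euc N → ℝ) (hH : IsFinslerNorm H)
    (p : ℝ) (hp1 : 1 ≤ p) (hpN : p < (N : ℝ))
    (Ω : Set (Euc N)) (hΩopen : IsOpen Ω) (hΩconn : IsConnected Ω) (h0 : 0 ∈ Ω) :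
    sInf {r : ℝ | ∃ u : Euc N → ℝ, IsTestFun Ω u ∧ u ≠ 0 ∧
        r = (∫ x in Ω, |⟪(polarNorm H x)⁻¹ • x, gradient u x⟫| ^ p) /
            ∫ x in Ω, |u x| ^ p / polarNorm H x ^ p}
      = (((N : ℝ) - p) / p) ^ p ∧
    (1 < p → ∀ u : Euc N → ℝ, IsTestFun Ω u → u ≠ 0 →
      (((N : ℝ) - p) / p) ^ p <
        (∫ x in Ω, |⟪(polarNorm H x)⁻¹ • x, gradient u x⟫| ^ p) /
          ∫ x in Ω, |u x| ^ p / polarNorm H x ^ p) := by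
  obtain ⟨a, b, ha, hab, hbounds⟩ := hH.bounds
  have hg : IsGauge (polarNorm H) := isGauge_polarNorm ha (ha.trans_le hab)
    (fun ξ ↦ (hbounds ξ).1) fun ξ ↦ (hbounds ξ).2
  simpa [IsTestFun, hardyQuotient, inner_gradient_right] using
    finsler_hardy_subcritical_best_constant_general volume hg hp1 (by simpa using hpN)
      (hΩopen.mem_nhds h0)
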